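/- Let A : ℝ → ℝ be Lipschitz with graph LG, let 0 < α < 1/‖A′‖_∞, w ∈ LG, δ > 0, ε > 0, and suppose the ball B(λ, εδ) is contained in the truncated lower cone Γ_δ^−(w, α). Then with c(α) = (1 − α‖A′‖_∞)/(√(1+‖A′‖_∞²)·√(1+α²)) and C(α) = 1 + √(1+‖A′‖_∞²), one has min(ε, c(α))·(δ + |Re(z − w)|) ≤ |z − λ| ≤ C(α)·(δ + |Re(z − w)|) for every z ∈ LG. -/

import Mathlib

/-!
The upper bound is the triangle inequality through `w`, since `|z - w| ≤ √(1+L²) |Re(z - w)|`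
on the graph and `|w - l| < δ`.

For the lower bound, write `c` for the constant `c(α)`. The graph stays away from the lower cone
at `w`: every `p` in the cone satisfies `c |Re(z - w)| ≤ |z - p|` (`cone_dist`). The point `z` is
not in the cone, so `|z - l| ≥ εδ`, and moving from `l` towards `z` by any distance `s < εδ` stays
in the ball, hence in the cone. Applied to the point reached, the estimate gives
`c |Re(z - w)| ≤ |z - l| - s`; letting `s → εδ` yields `εδ + c |Re(z - w)| ≤ |z - l|`.
-/

open MeasureTheory Metric Filter Set Complex Topology Bornology
open scoped ENNReal NNReal Real

noncomputable section

/-- Admissible-function quantity defining analytic capacity of a compact set. -/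
def capAux (F : Set ℂ) : ℝ :=
  sSup {r : ℝ | ∃ f : ℂ → ℂ, DifferentiableOn ℂ f Fᶜ ∧ (∀ z ∈ Fᶜ, ‖f z‖ ≤ 1) ∧
    ∃ f0 d : ℂ, Tendsto f (cobounded ℂ) (𝓝 f0) ∧
      Tendsto (fun z => z * (f z - f0)) (cobounded ℂ) (𝓝 d) ∧ r = ‖d‖}

/-- Analytic capacity of an arbitrary set. -/
def anCap (E : Set ℂ) : ℝ :=
  sSup {r : ℝ | ∃ F : Set ℂ, IsCompact F ∧ F ⊆ E ∧ r = capAux F}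

/-- Nontangential approach region Γ_σ(z). -/
def ntRegion (σ : ℝ) (z : ℂ) : Set ℂ :=
  interior (convexHull ℝ ({z} ∪ ball (0 : ℂ) σ))

/-- Cauchy transform of the complex measure ρ dμ. -/
def cauchyT (μ : Measure ℂ) (ρ : ℂ → ℂ) (l : ℂ) : ℂ :=
  ∫ w, (w - l)⁻¹ * ρ w ∂μ

/-- The set U(ρ dμ) of absolute convergence of the Cauchy transform. -/
def cauchyDom (μ : Measure ℂ) (ρ : ℂ → ℂ) : Set ℂ :=
  {l | Integrable (fun w => (w - l)⁻¹ * ρ w) μ}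

/-- 1-dimensional radial maximal function of a (positive) measure. -/
def radialMax (m : Measure ℂ) (z : ℂ) : ℝ≥0∞ :=
  ⨆ (r : ℝ) (_ : 0 < r), m (ball z r) / ENNReal.ofReal r

/-- Normalized arclength measure `dθ/2π` on the unit circle. -/
def circleMeasure : Measure ℂ :=
  (ENNReal.ofReal (2 * Real.pi))⁻¹ •
    (Measure.map (fun θ : ℝ => Complex.exp ((θ : ℂ) * Complex.I))
      (volume.restrict (Ico (0:ℝ) (2 * Real.pi))))

/-- Rational functions with poles off K. -/
def RatOn (K : Set ℂ) : Set (ℂ → ℂ) :=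
  {f | ∃ p q : Polynomial ℂ, (∀ z ∈ K, q.eval z ≠ 0) ∧ f = fun z => p.eval z / q.eval z}

/-- The `L^t(μ)` norm, for a real exponent `t`. -/
def tnorm (t : ℝ) (μ : Measure ℂ) (f : ℂ → ℂ) : ℝ :=
  (∫ z, ‖f z‖ ^ t ∂μ) ^ (1 / t)

/-- `C` is a bound for the evaluation functional at `l` on `Rat(K) ⊆ L^t(μ)`. -/
def EvalBound (t : ℝ) (K : Set ℂ) (μ : Measure ℂ) (l : ℂ) (C : ℝ) : Prop :=
  ∀ f ∈ RatOn K, ‖f l‖ ≤ C * tnorm t μ f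

/-- The norm `M_λ` of the evaluation functional at `l` on `R^t(K,μ)`. -/
def evalNorm (t : ℝ) (K : Set ℂ) (μ : Measure ℂ) (l : ℂ) : ℝ :=
  sInf {C : ℝ | 0 ≤ C ∧ EvalBound t K μ l C}

/-- Analytic bounded point evaluations of `R^t(K,μ)`: points having a neighborhood of
bounded point evaluations with uniformly bounded evaluation functionals (equivalently,
on which all evaluations extend analytically). -/
def abpeSet (t : ℝ) (K : Set ℂ) (μ : Measure ℂ) : Set ℂ :=
  {l | ∃ δ : ℝ, 0 < δ ∧ ∃ C : ℝ, ∀ w ∈ ball l δ, EvalBound t K μ w C}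

/-- Membership in `R^t(K,μ)`, the closure of `Rat(K)` in `L^t(μ)`. -/
def RtMem (t : ℝ) (K : Set ℂ) (μ : Measure ℂ) (f : ℂ → ℂ) : Prop :=
  ∃ r : ℕ → ℂ → ℂ, (∀ n, r n ∈ RatOn K) ∧
    Tendsto (fun n => ∫ z, ‖r n z - f z‖ ^ t ∂μ) atTop (𝓝 0)

/-- `R^t(K,μ)` is irreducible: it contains no nontrivial characteristic function. -/
def RtIrred (t : ℝ) (K : Set ℂ) (μ : Measure ℂ) : Prop :=
  ∀ E : Set ℂ, MeasurableSet E → RtMem t K μ (E.indicator 1) → μ E = 0 ∨ μ Eᶜ = 0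

/-- The strong outer boundary `∂_so Ω`. -/
def strongOuter (Ω : Set ℂ) : Set ℂ :=
  {z | z ∈ frontier Ω ∧ ∃ δ : ℝ, 0 < δ ∧ δ < 1 ∧ ntRegion (1/2) z ∩ ball z δ ⊆ Ω}

/-- The open cone with vertical axis at `l` of aperture `α`. -/
def coneAt (l : ℂ) (α : ℝ) : Set ℂ := {z | |z.re - l.re| < α * |z.im - l.im|}

def coneUp (l : ℂ) (α : ℝ) : Set ℂ := {z | z ∈ coneAt l α ∧ l.im < z.im}

def coneDown (l : ℂ) (α : ℝ) : Set ℂ := {z | z ∈ coneAt l α ∧ z.im < l.im}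

def coneUpT (δ : ℝ) (l : ℂ) (α : ℝ) : Set ℂ := ball l δ ∩ coneUp l α

def coneDownT (δ : ℝ) (l : ℂ) (α : ℝ) : Set ℂ := ball l δ ∩ coneDown l α

/-- The graph of `A : ℝ → ℝ` inside `ℂ`. -/
def lipGraph (A : ℝ → ℝ) : Set ℂ := {z | z.im = A z.re}

/-- The upper cone at `l` is outer for `K`. -/
def upperOuter (K : Set ℂ) (l : ℂ) (α : ℝ) : Prop :=
  ∃ δl εl : ℝ, 0 < δl ∧ 0 < εl ∧ ∀ δ : ℝ, 0 < δ → δ < δl →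
    ∃ lδ : ℂ, ball lδ (εl * δ) ⊆ Kᶜ ∩ coneUpT δ l α

/-- The lower cone at `l` is outer for `K`. -/
def lowerOuter (K : Set ℂ) (l : ℂ) (α : ℝ) : Prop :=
  ∃ δl εl : ℝ, 0 < δl ∧ 0 < εl ∧ ∀ δ : ℝ, 0 < δ → δ < δl →
    ∃ lδ : ℂ, ball lδ (εl * δ) ⊆ Kᶜ ∩ coneDownT δ l α

/-- The type I boundary `∂_{I,α}^{LG} K`. -/
def typeI (K : Set ℂ) (A : ℝ → ℝ) (α : ℝ) : Set ℂ :=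
  {l | l ∈ lipGraph A ∧ l ∈ frontier K ∧ (upperOuter K l α ∨ lowerOuter K l α)}

def upperInner (Ω : Set ℂ) (l : ℂ) (α : ℝ) : Prop := ∃ δ : ℝ, 0 < δ ∧ coneUpT δ l α ⊆ Ω

def lowerInner (Ω : Set ℂ) (l : ℂ) (α : ℝ) : Prop := ∃ δ : ℝ, 0 < δ ∧ coneDownT δ l α ⊆ Ω

/-- The type II boundary `∂_{II,α}^{LG} K`. -/
def typeII (K : Set ℂ) (A : ℝ → ℝ) (Ω : Set ℂ) (α : ℝ) : Set ℂ :=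
  {l | l ∈ typeI K A α ∧ (upperInner Ω l α ∨ lowerInner Ω l α)}

/-- One-dimensional Hausdorff measure on `ℂ`. -/
def H1m : Measure ℂ := Measure.hausdorffMeasure 1

/-- Support of a positive measure. -/
def suppM (ν : Measure ℂ) : Set ℂ := {z | ∀ r : ℝ, 0 < r → 0 < ν (ball z r)}

/-- A point `z` in the sector `|Im(z - w)| ≤ L |Re(z - w)|` lies at distance at least
`c(α) |Re(z - w)|` from every point of the cone at `w`. -/
lemma cone_dist {α L : ℝ} (hα : 0 < α) {w z p : ℂ}
    (hz : |z.im - w.im| ≤ L * |z.re - w.re|) (hp : p ∈ coneAt w α) :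
    (1 - α * L) / (Real.sqrt (1 + L^2) * Real.sqrt (1 + α^2)) * |z.re - w.re| ≤ ‖z - p‖ := by
  have hp' : |p.re - w.re| < α * |p.im - w.im| := hp
  have h1 : |z.re - w.re| ≤ |z.re - p.re| + |p.re - w.re| := abs_sub_le _ _ _
  have h2 : |p.im - w.im| ≤ |z.im - p.im| + |z.im - w.im| := by
    rw [abs_sub_comm z.im p.im]; exact abs_sub_le _ _ _
  have h3 : (1 - α * L) * |z.re - w.re| ≤ |z.re - p.re| + α * |z.im - p.im| := by
    have := mul_le_mul_of_nonneg_left h2 hα.le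
    have := mul_le_mul_of_nonneg_left hz hα.le
    nlinarith
  have h4 : |z.re - p.re| + α * |z.im - p.im| ≤ Real.sqrt (1 + α^2) * ‖z - p‖ := by
    rw [Complex.norm_eq_sqrt_sq_add_sq, ← Real.sqrt_mul (by positivity)]
    apply Real.le_sqrt_of_sq_le
    simp only [Complex.sub_re, Complex.sub_im]
    nlinarith [sq_nonneg (α * |z.re - p.re| - |z.im - p.im|), sq_abs (z.re - p.re),
      sq_abs (z.im - p.im)]
  have h5 : 1 ≤ Real.sqrt (1 + L^2) := Real.one_le_sqrt.2 (by nlinarith [sq_nonneg L])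
  have h6 : 0 < Real.sqrt (1 + α^2) := Real.sqrt_pos.2 (by positivity)
  rw [div_mul_eq_mul_div, div_le_iff₀ (by positivity)]
  have h7 : 0 ≤ Real.sqrt (1 + α^2) * ‖z - p‖ := by positivity
  nlinarith

/-- Lemma 8 (LemmaEasy): if `B(l, εδ)` is contained in the truncated lower cone
`Γ_δ^-(w,α)` at a point `w` of the Lipschitz graph, then for every point `z` of
the graph, `|z - l|` is comparable to `δ + |Re(z-w)|`, with constants
`c(α) = (1-α‖A'‖_∞)/(√(1+‖A'‖_∞²)√(1+α²))` and `C(α) = 1+√(1+‖A'‖_∞²)`. -/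
theorem stmt16
    (A : ℝ → ℝ) (L : ℝ≥0) (hA : LipschitzWith L A)
    (α : ℝ) (hα : 0 < α) (hαL : α * (L:ℝ) < 1)
    (w : ℂ) (hw : w ∈ lipGraph A)
    (δ ε : ℝ) (hδ : 0 < δ) (hε : 0 < ε)
    (l : ℂ) (hball : ball l (ε * δ) ⊆ coneDownT δ w α) :
    ∀ z ∈ lipGraph A,
      min ε ((1 - α * (L:ℝ)) / (Real.sqrt (1 + (L:ℝ)^2) * Real.sqrt (1 + α^2)))
          * (δ + |z.re - w.re|) ≤ ‖z - l‖ ∧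
      ‖z - l‖ ≤ (1 + Real.sqrt (1 + (L:ℝ)^2)) * (δ + |z.re - w.re|) := by
  intro z hz
  have hz' : z.im = A z.re := hz
  have hw' : w.im = A w.re := hw
  have hlip : |z.im - w.im| ≤ (L:ℝ) * |z.re - w.re| := by
    rw [hz', hw', ← Real.dist_eq, ← Real.dist_eq]
    exact hA.dist_le_mul _ _
  have hx : 0 ≤ |z.re - w.re| := abs_nonneg _
  have hεδ : 0 < ε * δ := mul_pos hε hδ
  constructor
  · set c := (1 - α * (L:ℝ)) / (Real.sqrt (1 + (L:ℝ)^2) * Real.sqrt (1 + α^2)) with hc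
    have hD : ε * δ ≤ ‖z - l‖ := by
      by_contra! h
      have hzc : z ∈ coneDownT δ w α := hball (by rwa [mem_ball, dist_eq_norm])
      have h1 : |z.re - w.re| < α * |z.im - w.im| := hzc.2.1
      nlinarith [mul_le_mul_of_nonneg_left hlip hα.le]
    have hDpos : 0 < ‖z - l‖ := hεδ.trans_le hD
    have key : ε * δ ≤ ‖z - l‖ - c * |z.re - w.re| := by
      refine le_of_forall_lt_imp_le_of_dense fun s hs => ?_
      rcases lt_or_ge s 0 with hs0 | hs0
      -- a negative `s` is covered by the estimate at `l` itself
      · have := cone_dist hα hlip (hball (mem_ball_self hεδ)).2.1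
        linarith
      set p : ℂ := l + ((s / ‖z - l‖ : ℝ) : ℂ) * (z - l) with hp
      have hpl : p - l = ((s / ‖z - l‖ : ℝ) : ℂ) * (z - l) := by rw [hp]; ring
      have hpb : p ∈ ball l (ε * δ) := by
        rw [mem_ball, dist_eq_norm, hpl, norm_mul, Complex.norm_of_nonneg (by positivity),
          div_mul_cancel₀ _ hDpos.ne']
        exact hs
      have hzp : ‖z - p‖ = ‖z - l‖ - s := by
        have : z - p = ((1 - s / ‖z - l‖ : ℝ) : ℂ) * (z - l) := by
          rw [hp]; push_cast; ring
        have h1 : s / ‖z - l‖ ≤ 1 := (div_le_one hDpos).2 (hs.le.trans hD)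
        rw [this, norm_mul, Complex.norm_of_nonneg (by linarith), sub_mul, one_mul,
          div_mul_cancel₀ _ hDpos.ne']
      have := cone_dist hα hlip (hball hpb).2.1
      linarith
    have h1 := mul_le_mul_of_nonneg_right (min_le_left ε c) hδ.le
    have h2 := mul_le_mul_of_nonneg_right (min_le_right ε c) hx
    linarith
  · have hl : ‖l - w‖ < δ := by
      have := (hball (mem_ball_self hεδ)).1
      rwa [mem_ball, dist_eq_norm] at this
    have hzw : ‖z - w‖ ≤ Real.sqrt (1 + (L:ℝ)^2) * |z.re - w.re| := by
      rw [Complex.norm_eq_sqrt_sq_add_sq, ← Real.sqrt_sq hx, ← Real.sqrt_mul (by positivity)]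
      apply Real.sqrt_le_sqrt
      simp only [Complex.sub_re, Complex.sub_im]
      have := pow_le_pow_left₀ (abs_nonneg _) hlip 2
      rw [mul_pow, sq_abs, sq_abs] at this
      rw [sq_abs]
      linarith
    have htri : ‖z - l‖ ≤ ‖z - w‖ + ‖l - w‖ := by
      rw [norm_sub_rev l w]; exact norm_sub_le_norm_sub_add_norm_sub z w l
    have hS := Real.sqrt_nonneg (1 + (L:ℝ)^2)
    nlinarith [mul_nonneg hS hδ.le]

end
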